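/- Let k be an infinite field, K a field extension of k, and V a nonzero finite-dimensional k-subspace of K. Let v₁, …, v_r : K∖{0} → ℤ be maps satisfying, for each i: v_i(fg) = v_i(f) + v_i(g) for all nonzero f, g; v_i(λ) = 0 for all λ ∈ k∖{0}; and v_i(f+g) ≥ min(v_i(f), v_i(g)) whenever f, g, f+g are all nonzero. Then there exists b ∈ V∖{0} such that v_i(b) = min_{f ∈ V∖{0}} v_i(f) simultaneously for every i = 1, …, r. -/

import Mathlib

/-!
The nonzero vectors whose value strictly exceeds `v g` form, together with `0`, a subspace not
containing `g`, hence a proper one. If it contained a spanning set it would be everything, so every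
value is bounded below by the value of some nonzero member of a spanning set; in finite dimension
each `vᵢ` therefore attains a minimum, at some `gᵢ`. Over an infinite field the finitely many proper
subspaces belonging to the `gᵢ` do not cover `V`, and a nonzero vector outside all of them
has minimal value for every `vᵢ`.
-/

/-- A prevaluation (in the sense of Kaveh and Khovanskii) on the `R`-module `M`: a valuation without
multiplicativity. The value `v 0` is unconstrained. Applied to `c` and `c⁻¹`, the axiom `le_smul`
says over a field that nonzero scalars preserve `v`. -/
structure IsPrevaluation (R : Type*) {M Γ : Type*} [Semiring R] [AddCommMonoid M] [Module R M]
    [LinearOrder Γ] (v : M → Γ) : Prop where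
  le_smul : ∀ (c : R) (f : M), c • f ≠ 0 → v f ≤ v (c • f)
  min_le_add : ∀ f g : M, f ≠ 0 → g ≠ 0 → f + g ≠ 0 → min (v f) (v g) ≤ v (f + g)

namespace IsPrevaluation

section Semiring

variable {R M Γ : Type*} [Semiring R] [AddCommMonoid M] [Module R M] [LinearOrder Γ] {v : M → Γ}

theorem comp_injective {N : Type*} [AddCommMonoid N] [Module R N] (hv : IsPrevaluation R v)
    (e : N →ₗ[R] M) (he : Function.Injective e) : IsPrevaluation R (v ∘ e) where
  le_smul c f hcf := by
    simpa using hv.le_smul c (e f) (by simpa using (map_ne_zero_iff e he).2 hcf)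
  min_le_add f g hf hg hfg := by
    have he_ne {x : N} (hx : x ≠ 0) : e x ≠ 0 := (map_ne_zero_iff e he).2 hx
    simpa using hv.min_le_add (e f) (e g) (he_ne hf) (he_ne hg) (by simpa using he_ne hfg)

/-- The submodule of vectors of value greater than `n`; `0` belongs to it whatever `v 0` is. -/
def gtSubmodule (hv : IsPrevaluation R v) (n : Γ) : Submodule R M where
  carrier := {f | f ≠ 0 → n < v f}
  zero_mem' h := absurd rfl h
  add_mem' {f g} hf hg hfg := by
    rcases eq_or_ne f 0 with rfl | hf₀
    · simpa using hg (by simpa using hfg)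
    rcases eq_or_ne g 0 with rfl | hg₀
    · simpa using hf (by simpa using hfg)
    exact (lt_min (hf hf₀) (hg hg₀)).trans_le (hv.min_le_add f g hf₀ hg₀ hfg)
  smul_mem' c f hf hcf :=
    (hf (right_ne_zero_of_smul hcf)).trans_le (hv.le_smul c f hcf)

theorem mem_gtSubmodule (hv : IsPrevaluation R v) {n : Γ} {f : M} :
    f ∈ hv.gtSubmodule n ↔ (f ≠ 0 → n < v f) :=
  Iff.rfl

theorem notMem_gtSubmodule (hv : IsPrevaluation R v) {n : Γ} {f : M} :
    f ∉ hv.gtSubmodule n ↔ f ≠ 0 ∧ v f ≤ n := by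
  simp only [mem_gtSubmodule, Classical.not_imp, not_lt]

theorem gtSubmodule_ne_top (hv : IsPrevaluation R v) {g : M} (hg : g ≠ 0) :
    hv.gtSubmodule (v g) ≠ ⊤ := fun h ↦
  hv.notMem_gtSubmodule.2 ⟨hg, le_rfl⟩ (h ▸ Submodule.mem_top)

theorem exists_le_of_mem_span (hv : IsPrevaluation R v) {s : Set M} {f : M}
    (hf : f ∈ Submodule.span R s) (hf₀ : f ≠ 0) : ∃ g ∈ s, g ≠ 0 ∧ v g ≤ v f := by
  by_contra! h
  have hs : Submodule.span R s ≤ hv.gtSubmodule (v f) := Submodule.span_le.2 h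
  exact lt_irrefl _ (hs hf hf₀)

theorem exists_min_of_finite [Module.Finite R M] [Nontrivial M] (hv : IsPrevaluation R v) :
    ∃ g ≠ 0, ∀ f ≠ 0, v g ≤ v f := by
  obtain ⟨s, hs_fin, hs⟩ := Submodule.fg_def.1 (Module.Finite.fg_top (R := R) (M := M))
  have below (f : M) (hf : f ≠ 0) : ∃ g ∈ s, g ≠ 0 ∧ v g ≤ v f :=
    hv.exists_le_of_mem_span (hs ▸ Submodule.mem_top) hf
  obtain ⟨x, hx⟩ := exists_ne (0 : M)
  obtain ⟨y, hys, hy, -⟩ := below x hx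
  obtain ⟨g, ⟨-, hg⟩, hg_min⟩ :=
    Set.exists_min_image {g ∈ s | g ≠ 0} v (hs_fin.sep _) ⟨y, hys, hy⟩
  refine ⟨g, hg, fun f hf ↦ ?_⟩
  obtain ⟨g', hg's, hg', hle⟩ := below f hf
  exact (hg_min g' ⟨hg's, hg'⟩).trans hle

end Semiring

theorem of_map_mul {R A Γ : Type*} [CommSemiring R] [Semiring A] [Algebra R A] [AddZeroClass Γ]
    [LinearOrder Γ] {v : A → Γ} (map_mul : ∀ f g : A, f ≠ 0 → g ≠ 0 → v (f * g) = v f + v g)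
    (map_algebraMap : ∀ c : R, c ≠ 0 → v (algebraMap R A c) = 0)
    (min_le_add : ∀ f g : A, f ≠ 0 → g ≠ 0 → f + g ≠ 0 → min (v f) (v g) ≤ v (f + g)) :
    IsPrevaluation R v where
  le_smul c f hcf := by
    have hc : c ≠ 0 := left_ne_zero_of_smul hcf
    rw [Algebra.smul_def] at hcf ⊢
    rw [map_mul _ _ (left_ne_zero_of_mul hcf) (right_ne_zero_of_mul hcf), map_algebraMap c hc,
      zero_add]
  min_le_add := min_le_add

end IsPrevaluation

section InfiniteField

variable {k M ι : Type*} [DivisionRing k] [Infinite k] [AddCommGroup M] [Module k M] [Finite ι]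

theorem exists_ne_zero_forall_notMem_of_ne_top [Nontrivial M] {p : ι → Submodule k M}
    (hp : ∀ i, p i ≠ ⊤) : ∃ b ≠ 0, ∀ i, b ∉ p i := by
  obtain hι | ⟨⟨i⟩⟩ := isEmpty_or_nonempty ι
  · obtain ⟨b, hb⟩ := exists_ne (0 : M)
    exact ⟨b, hb, isEmptyElim⟩
  · have not_cover : ⋃ i, (p i : Set M) ≠ Set.univ := fun h ↦
      let ⟨i, hi⟩ := Subspace.exists_eq_top_of_iUnion_eq_univ h
      hp i hi
    obtain ⟨b, hb⟩ := (Set.ne_univ_iff_exists_notMem _).1 not_cover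
    simp only [Set.mem_iUnion, SetLike.mem_coe, not_exists] at hb
    exact ⟨b, fun hb₀ ↦ hb i (hb₀ ▸ zero_mem (p i)), hb⟩

variable {Γ : ι → Type*} [∀ i, LinearOrder (Γ i)] {v : ∀ i, M → Γ i}

theorem IsPrevaluation.exists_simultaneous_le [Nontrivial M] (hv : ∀ i, IsPrevaluation k (v i))
    {g : ι → M} (hg : ∀ i, g i ≠ 0) : ∃ b ≠ 0, ∀ i, v i b ≤ v i (g i) := by
  obtain ⟨b, hb₀, hb⟩ :=
    exists_ne_zero_forall_notMem_of_ne_top fun i ↦ (hv i).gtSubmodule_ne_top (hg i)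
  exact ⟨b, hb₀, fun i ↦ ((hv i).notMem_gtSubmodule.1 (hb i)).2⟩

theorem exists_simultaneous_min_valuation_general (hv : ∀ i, IsPrevaluation k (v i))
    (V : Submodule k M) (hV : V ≠ ⊥) [FiniteDimensional k V] :
    ∃ b ∈ V, b ≠ 0 ∧ ∀ i, ∀ f ∈ V, f ≠ 0 → v i b ≤ v i f := by
  have : Nontrivial V := Submodule.nontrivial_iff_ne_bot.2 hV
  have hvV (i : ι) : IsPrevaluation k (v i ∘ V.subtype) :=
    (hv i).comp_injective V.subtype V.injective_subtype
  choose g hg hg_min using fun i ↦ (hvV i).exists_min_of_finite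
  obtain ⟨b, hb₀, hb⟩ := IsPrevaluation.exists_simultaneous_le hvV hg
  refine ⟨b, b.2, by simpa using hb₀, fun i f hf hf₀ ↦ ?_⟩
  exact (hb i).trans (hg_min i ⟨f, hf⟩ (by simpa using hf₀))

end InfiniteField

/-- Genericity of pole orders: let `k` be an infinite field, `K` a field extension of `k`,
`V` a nonzero finite-dimensional `k`-subspace of `K`, and `v₁, …, v_r : K∖{0} → ℤ`
valuation-like maps (each satisfies `vᵢ(fg) = vᵢ(f) + vᵢ(g)`, `vᵢ = 0` on `k∖{0}`, and
`vᵢ(f+g) ≥ min(vᵢ(f), vᵢ(g))` when `f, g, f+g` are nonzero).  Then some `b ∈ V∖{0}`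
simultaneously achieves `vᵢ(b) = min_{f ∈ V∖{0}} vᵢ(f)` for every `i`. -/
theorem exists_simultaneous_min_valuation
    (k K : Type*) [Field k] [Infinite k] [Field K] [Algebra k K]
    (V : Submodule k K) (hV : V ≠ ⊥) (hVfd : FiniteDimensional k V)
    (r : ℕ) (v : Fin r → K → ℤ)
    (hv_mul : ∀ i, ∀ f g : K, f ≠ 0 → g ≠ 0 → v i (f * g) = v i f + v i g)
    (hv_const : ∀ i, ∀ lam : k, lam ≠ 0 → v i (algebraMap k K lam) = 0)
    (hv_add : ∀ i, ∀ f g : K, f ≠ 0 → g ≠ 0 → f + g ≠ 0 →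
      min (v i f) (v i g) ≤ v i (f + g)) :
    ∃ b ∈ V, b ≠ 0 ∧ ∀ i : Fin r, ∀ f ∈ V, f ≠ 0 → v i b ≤ v i f :=
  exists_simultaneous_min_valuation_general
    (fun i ↦ .of_map_mul (hv_mul i) (hv_const i) (hv_add i)) V hV
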